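/- Let k ≥ 1 and l ≥ 0 be integers, let t = l + k − 1, and let both C*_{2k+1,l} and C*_{3,t} be defined and have order n (so n ≥ 2k + 1 + l). Then q_min(C*_{3,t}) ≤ q_min(C*_{2k+1,l}), with equality if and only if k = 1. -/

import Mathlib

open scoped Classical

/-- Edge relation for the graph `C*_{s,l}` on vertex indices `0, …, n-1`:
vertices `0, …, s-1` form a cycle `C_s` (with `0` playing the role of `v_1`);
vertices `0, s, s+1, …, s+l-1` form a path of length `l` hanging at `0`;
and all remaining vertices `s+l, …, n-1` are pendant vertices attached to the
other end of the path (to `0` itself when `l = 0`). -/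
def cstarRel (s l : ℕ) (a b : ℕ) : Prop :=
  (b = a + 1 ∧ a + 1 < s) ∨
  (a = 0 ∧ b = s - 1) ∨
  (1 ≤ l ∧ a = 0 ∧ b = s) ∨
  (b = a + 1 ∧ s ≤ a ∧ a + 1 < s + l) ∨
  (a = (if l = 0 then 0 else s + l - 1) ∧ s + l ≤ b)

/-- The graph `C*_{s,l}` of order `n`: a cycle `C_s` with a path of length `l`
attached, and `n - s - l` pendant edges attached at the far end of the path. -/
def Cstar (n s l : ℕ) : SimpleGraph (Fin n) :=
  SimpleGraph.fromRel (fun i j => cstarRel s l i.val j.val)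

/-- The signless Laplacian matrix `Q(G) = D(G) + A(G)` of a finite simple graph. -/
noncomputable def signlessLaplacian {V : Type*} [Fintype V] (G : SimpleGraph V) :
    Matrix V V ℝ :=
  fun i j => (if i = j then (G.degree i : ℝ) else 0) + (if G.Adj i j then 1 else 0)

/-- The least eigenvalue of the signless Laplacian of `G`. -/
noncomputable def qmin {V : Type*} [Fintype V] (G : SimpleGraph V) : ℝ :=
  sInf {μ : ℝ | ∃ x : V → ℝ, x ≠ 0 ∧ (signlessLaplacian G).mulVec x = μ • x}

/-!
Reflecting the cycle of `C*_{2k+1,l}` is an automorphism, so a least eigenvector can be chosen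
symmetric or antisymmetric. Its absolute values give a test vector on `C*_{3,l+k-1}`, where the
path from one triangle vertex of degree two through the third triangle vertex takes over one half
of the cycle. A symmetric vector is read from the middle of the cycle back to its root and on down
the attached path; an antisymmetric one vanishes at the root and off the cycle, and is read from
the root to the middle of the cycle, then continued by a constant. One of the remaining `k` cycle
values goes to the other triangle vertex of degree two, the other `k - 1` to additional pendant
vertices. Replacing the values along the path by their running maximum, which the additional
pendant vertices can then share without contributing to the quadratic form, does not decrease the
norm and does not increase the quadratic form. For `k ≥ 2` there is at least one such pendant
vertex, and the inequality is strict, because a nonzero test vector that agrees at a pendant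
vertex and at its neighbour (up to the alternating sign) is never a least eigenvector.
-/

open Finset Matrix
open scoped MatrixOrder

theorem mem_spectrum_iff_exists_mulVec_eq_smul {K V : Type*} [Field K] [Fintype V]
    {M : Matrix V V K} {μ : K} : μ ∈ spectrum K M ↔ ∃ x : V → K, x ≠ 0 ∧ M *ᵥ x = μ • x := by
  rw [← spectrum_toLin', ← Module.End.hasEigenvalue_iff_mem_spectrum]
  constructor
  · intro hμ
    obtain ⟨x, hxμ, hx⟩ := hμ.exists_hasEigenvector
    exact ⟨x, hx, by rw [← toLin'_apply, Module.End.mem_eigenspace_iff.1 hxμ]⟩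
  · rintro ⟨x, hx, hxμ⟩
    exact Module.End.hasEigenvalue_of_hasEigenvector
      ⟨Module.End.mem_eigenspace_iff.2 (by rw [toLin'_apply, hxμ]), hx⟩

section SignlessLaplacian

variable {V : Type*} [Fintype V] (G : SimpleGraph V)

theorem signlessLaplacian_mulVec_apply (x : V → ℝ) (i : V) :
    (signlessLaplacian G *ᵥ x) i = ∑ j, if G.Adj i j then x i + x j else 0 := by
  have hdeg : (G.degree i : ℝ) * x i = ∑ j, if G.Adj i j then x i else 0 := by
    rw [← sum_filter, ← G.neighborFinset_eq_filter, sum_const, G.card_neighborFinset_eq_degree,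
      nsmul_eq_mul]
  simp only [mulVec, dotProduct, signlessLaplacian, add_mul, ite_mul, one_mul, zero_mul,
    sum_add_distrib, sum_ite_eq, mem_univ, if_true, hdeg]
  rw [← sum_add_distrib]
  exact sum_congr rfl fun j _ ↦ by split_ifs <;> simp only [add_zero]

theorem dotProduct_signlessLaplacian_mulVec (x : V → ℝ) :
    x ⬝ᵥ (signlessLaplacian G *ᵥ x) =
      (∑ i, ∑ j, if G.Adj i j then (x i + x j) ^ 2 else 0) / 2 := by
  have hrow : x ⬝ᵥ (signlessLaplacian G *ᵥ x) =
      ∑ i, ∑ j, if G.Adj i j then x i * (x i + x j) else 0 := by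
    simp only [dotProduct, signlessLaplacian_mulVec_apply, mul_sum, mul_ite, mul_zero]
  have hcol : x ⬝ᵥ (signlessLaplacian G *ᵥ x) =
      ∑ i, ∑ j, if G.Adj i j then x j * (x i + x j) else 0 := by
    rw [hrow, sum_comm]
    simp only [G.adj_comm, add_comm]
  rw [eq_div_iff two_ne_zero, mul_two]
  nth_rw 1 [hrow]
  rw [hcol]
  simp only [← sum_add_distrib]
  exact sum_congr rfl fun i _ ↦ sum_congr rfl fun j _ ↦ by split_ifs <;> ring

theorem isHermitian_signlessLaplacian : (signlessLaplacian G).IsHermitian := by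
  ext i j
  simp only [conjTranspose_apply, star_trivial, signlessLaplacian, G.adj_comm i j]
  rcases eq_or_ne i j with rfl | hij
  · rfl
  · rw [if_neg hij, if_neg hij.symm]

theorem posSemidef_signlessLaplacian : (signlessLaplacian G).PosSemidef := by
  refine .of_dotProduct_mulVec_nonneg (isHermitian_signlessLaplacian G) fun x ↦ ?_
  rw [star_trivial, dotProduct_signlessLaplacian_mulVec]
  positivity

theorem signlessLaplacian_mulVec_comp_iso (φ : G ≃g G) (x : V → ℝ) :
    signlessLaplacian G *ᵥ (x ∘ φ) = (signlessLaplacian G *ᵥ x) ∘ φ := by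
  ext i
  simp only [signlessLaplacian_mulVec_apply, Function.comp_apply]
  rw [← φ.toEquiv.sum_comp fun j ↦ if G.Adj (φ i) j then x (φ i) + x j else 0]
  exact sum_congr rfl fun j _ ↦ by simp only [RelIso.coe_fn_toEquiv, φ.map_adj_iff]

theorem qmin_eq_sInf_spectrum : qmin G = sInf (spectrum ℝ (signlessLaplacian G)) := by
  simp only [qmin, ← mem_spectrum_iff_exists_mulVec_eq_smul, Set.ofPred_mem_eq]

theorem qmin_nonneg : 0 ≤ qmin G := by
  rw [qmin_eq_sInf_spectrum]
  exact Real.sInf_nonneg (posSemidef_iff_isHermitian_and_spectrum_nonneg.1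
    (posSemidef_signlessLaplacian G)).2

theorem exists_eigenvector_qmin [Nonempty V] :
    ∃ x : V → ℝ, x ≠ 0 ∧ signlessLaplacian G *ᵥ x = qmin G • x := by
  rw [← mem_spectrum_iff_exists_mulVec_eq_smul, qmin_eq_sInf_spectrum]
  refine Set.Nonempty.csInf_mem ?_ (finite_real_spectrum (A := signlessLaplacian G))
  rw [(isHermitian_signlessLaplacian G).spectrum_real_eq_range_eigenvalues]
  exact Set.range_nonempty _

theorem qmin_mul_dotProduct_self_le (x : V → ℝ) :
    qmin G * (x ⬝ᵥ x) ≤ x ⬝ᵥ (signlessLaplacian G *ᵥ x) := by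
  have hq : algebraMap ℝ _ (qmin G) ≤ signlessLaplacian G := by
    refine algebraMap_le_of_le_spectrum (fun μ hμ ↦ ?_)
      (isHermitian_signlessLaplacian G).isSelfAdjoint
    rw [qmin_eq_sInf_spectrum]
    exact csInf_le finite_real_spectrum.bddBelow hμ
  have hx := (Matrix.le_iff.1 hq).dotProduct_mulVec_nonneg x
  rw [star_trivial, sub_mulVec, Algebra.algebraMap_eq_smul_one, smul_mulVec, one_mulVec,
    dotProduct_sub, dotProduct_smul, smul_eq_mul] at hx
  exact sub_nonneg.1 hx

/-- Averaging a least eigenvector over `{1, φ}` with either sign keeps it an eigenvector, and one of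
the two averages is nonzero. -/
theorem exists_eigenvector_qmin_comp_involution [Nonempty V] (φ : G ≃g G)
    (hφ : Function.Involutive φ) :
    ∃ x : V → ℝ, ∃ ε : ℝ, x ≠ 0 ∧ signlessLaplacian G *ᵥ x = qmin G • x ∧
      ε ^ 2 = 1 ∧ x ∘ φ = ε • x := by
  obtain ⟨x, hx, hxq⟩ := exists_eigenvector_qmin G
  have hxφ : signlessLaplacian G *ᵥ (x ∘ φ) = qmin G • (x ∘ φ) := by
    rw [signlessLaplacian_mulVec_comp_iso, hxq]
    rfl
  have hxφφ : (x ∘ φ) ∘ φ = x := by rw [Function.comp_assoc, hφ.comp_self, Function.comp_id]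
  by_cases hsymm : x + x ∘ φ = 0
  · refine ⟨x, -1, hx, hxq, by norm_num, ?_⟩
    rw [neg_one_smul, eq_neg_iff_add_eq_zero, add_comm, hsymm]
  · refine ⟨x + x ∘ φ, 1, hsymm, by rw [mulVec_add, hxq, hxφ, smul_add], one_pow 2, ?_⟩
    rw [one_smul, Pi.add_comp, hxφφ, add_comm]

end SignlessLaplacian

section CstarForm

variable {s l P : ℕ}

/-- The neighbour of the vertex `b > 0` of `C*_{s,l}` on its way to the vertex `0`, where the cycle
is entered through the edge `{0, 1}`. Apart from the edges `{cstarParent s l b, b}` with `0 < b`,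
the graph only has the edge `{0, s - 1}`. -/
def cstarParent (s l b : ℕ) : ℕ :=
  if b < s then b - 1 else if b = s ∨ l = 0 then 0 else min b (s + l) - 1

/-- The value at `x` of the quadratic form of the signless Laplacian of `C*_{s,l}` with `P` pendant
vertices, where `x` takes the values `c 0, …, c (s - 1)` on the cycle, `p 0 = c 0, p 1, …, p l` on
the path and `g 0, …, g (P - 1)` on the pendant vertices. The cycle is closed by `c s = c 0`. -/
def cstarEnergy (s l P : ℕ) (c p g : ℕ → ℝ) : ℝ :=
  ∑ i ∈ range s, (c i + c (i + 1)) ^ 2 + ∑ i ∈ range l, (p i + p (i + 1)) ^ 2 +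
    ∑ j ∈ range P, (p l + g j) ^ 2

/-- The squared Euclidean norm of the vector on `C*_{s,l}` described in `cstarEnergy`. -/
def cstarNormSq (s l P : ℕ) (c p g : ℕ → ℝ) : ℝ :=
  ∑ i ∈ range s, c i ^ 2 + ∑ i ∈ range l, p (i + 1) ^ 2 + ∑ j ∈ range P, g j ^ 2

/-- The vector `X` on the vertices of `C*_{s,l}` with `P` pendant vertices takes the values `c` on
the cycle, `p` on the path and `g` on the pendant vertices. The vertex `0` is read three times, as
`c 0`, `c s` and `p 0`. -/
structure IsCstarProfile (s l P : ℕ) (X c p g : ℕ → ℝ) : Prop where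
  cycle : ∀ i < s, X i = c i
  closed : c s = c 0
  root : p 0 = c 0
  path : ∀ i < l, X (s + i) = p (i + 1)
  pendant : ∀ j < P, X (s + l + j) = g j

theorem cstarRel_iff_parent (hs : 3 ≤ s) (a b : ℕ) :
    cstarRel s l a b ↔ 0 < b ∧ a = cstarParent s l b ∨ a = 0 ∧ b = s - 1 := by
  unfold cstarRel cstarParent
  split_ifs <;> omega

theorem cstarRel_lt (hs : 3 ≤ s) {a b : ℕ} (h : cstarRel s l a b) : a < b := by
  unfold cstarRel at h
  split_ifs at h <;> omega

theorem Cstar_adj_iff (hs : 3 ≤ s) {n : ℕ} (i j : Fin n) :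
    (Cstar n s l).Adj i j ↔ cstarRel s l i j ∨ cstarRel s l j i := by
  rw [Cstar, SimpleGraph.fromRel_adj, and_iff_right_iff_imp]
  rintro (h | h)
  · exact Fin.ne_of_lt (cstarRel_lt hs h)
  · exact Fin.ne_of_gt (cstarRel_lt hs h)

theorem Cstar_dotProduct_mulVec_eq_sum_rel (hs : 3 ≤ s) (n : ℕ) (X : ℕ → ℝ) :
    (fun i : Fin n ↦ X i) ⬝ᵥ (signlessLaplacian (Cstar n s l) *ᵥ fun i : Fin n ↦ X i) =
      ∑ b ∈ range n, ∑ a ∈ range n, if cstarRel s l a b then (X a + X b) ^ 2 else 0 := by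
  have hsplit : ∀ i j : Fin n, (if (Cstar n s l).Adj i j then (X i + X j) ^ 2 else 0) =
      (if cstarRel s l i j then (X i + X j) ^ 2 else 0) +
        if cstarRel s l j i then (X j + X i) ^ 2 else 0 := by
    intro i j
    rw [add_comm (X j), Cstar_adj_iff hs]
    by_cases hij : cstarRel s l i j
    · have hji : ¬ cstarRel s l j i := fun hji ↦
        (cstarRel_lt hs hij).not_gt (cstarRel_lt hs hji)
      simp only [hij, hji, true_or, if_true, if_false, add_zero]
    · simp only [hij, false_or, if_false, zero_add]
  simp only [dotProduct_signlessLaplacian_mulVec, hsplit, sum_add_distrib]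
  rw [sum_comm, add_self_div_two]
  simp only [sum_range]

theorem sum_cstarRel_eq_sum_parent (hs : 3 ≤ s) {n : ℕ} (hn : s ≤ n) (f : ℕ → ℕ → ℝ) :
    (∑ b ∈ range n, ∑ a ∈ range n, if cstarRel s l a b then f a b else 0) =
      f 0 (s - 1) + ∑ b ∈ range (n - 1), f (cstarParent s l (b + 1)) (b + 1) := by
  have hparent_lt : ∀ b, 0 < b → cstarParent s l b < b := fun b hb ↦
    cstarRel_lt hs ((cstarRel_iff_parent (l := l) hs _ b).2 (.inl ⟨hb, rfl⟩))
  have hclosing : cstarParent s l (s - 1) ≠ 0 := by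
    unfold cstarParent
    split_ifs <;> omega
  have hsplit : ∀ a b, (if cstarRel s l a b then f a b else 0) =
      (if a = cstarParent s l b then if 0 < b then f a b else 0 else 0) +
        if a = 0 then if b = s - 1 then f a b else 0 else 0 := by
    intro a b
    rw [cstarRel_iff_parent hs]
    grind
  have hinner : ∀ b ∈ range n, (∑ a ∈ range n, if cstarRel s l a b then f a b else 0) =
      (if 0 < b then f (cstarParent s l b) b else 0) + if b = s - 1 then f 0 b else 0 := by
    intro b hb
    rw [mem_range] at hb
    have hparent : cstarParent s l b < n ∨ ¬ 0 < b := by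
      rcases b.eq_zero_or_pos with h | h
      · exact .inr h.not_gt
      · exact .inl ((hparent_lt b h).trans hb)
    simp only [hsplit, sum_add_distrib, sum_ite_eq', mem_range]
    rw [if_pos (by omega : 0 < n)]
    rcases hparent with h | h
    · rw [if_pos h]
    · simp only [if_neg h, ite_self]
  rw [sum_congr rfl hinner, sum_add_distrib, sum_ite_eq', if_pos (mem_range.2 (by omega)),
    add_comm]
  obtain ⟨m, rfl⟩ : ∃ m, n = m + 1 := ⟨n - 1, by omega⟩
  simp only [sum_range_succ', Nat.succ_pos, if_true, lt_irrefl, if_false, add_zero,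
    Nat.add_sub_cancel]

theorem IsCstarProfile.apply_cstarParent_path {X c p g : ℕ → ℝ} (h : IsCstarProfile s l P X c p g)
    (hs : 0 < s) {i : ℕ} (hi : i ≤ l) : X (cstarParent s l (s + i)) = p i := by
  rcases i with _ | i
  · rw [cstarParent, if_neg (by omega), if_pos (by omega), h.cycle _ hs, h.root]
  · rw [← h.path i (by omega)]
    congr 1
    unfold cstarParent
    split_ifs <;> omega

theorem IsCstarProfile.apply_cstarParent_pendant {X c p g : ℕ → ℝ}
    (h : IsCstarProfile s l P X c p g) (hs : 0 < s) (j : ℕ) :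
    X (cstarParent s l (s + l + j)) = p l := by
  rw [← h.apply_cstarParent_path hs le_rfl]
  congr 1
  unfold cstarParent
  split_ifs <;> omega

theorem IsCstarProfile.energy_eq {X c p g : ℕ → ℝ} (h : IsCstarProfile s l P X c p g)
    (hs : 3 ≤ s) :
    (fun i : Fin (s + l + P) ↦ X i) ⬝ᵥ
      (signlessLaplacian (Cstar (s + l + P) s l) *ᵥ fun i : Fin (s + l + P) ↦ X i) =
      cstarEnergy s l P c p g := by
  rw [Cstar_dotProduct_mulVec_eq_sum_rel hs,
    sum_cstarRel_eq_sum_parent hs (by omega) fun a b ↦ (X a + X b) ^ 2]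
  obtain ⟨r, rfl⟩ : ∃ r, s = r + 1 := ⟨s - 1, by omega⟩
  have hcycle : ∑ i ∈ range r, (X (cstarParent (r + 1) l (i + 1)) + X (i + 1)) ^ 2 =
      ∑ i ∈ range r, (c i + c (i + 1)) ^ 2 := by
    refine sum_congr rfl fun i hi ↦ ?_
    have hi := mem_range.1 hi
    rw [cstarParent, if_pos (by omega), h.cycle _ (by omega), h.cycle _ (by omega),
      Nat.add_sub_cancel]
  have hpath : ∑ i ∈ range l, (X (cstarParent (r + 1) l (r + i + 1)) + X (r + i + 1)) ^ 2 =
      ∑ i ∈ range l, (p i + p (i + 1)) ^ 2 :=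
    sum_congr rfl fun i hi ↦ by
      have hi := mem_range.1 hi
      rw [add_right_comm, h.apply_cstarParent_path r.succ_pos hi.le, h.path i hi]
  have hpendant :
      ∑ j ∈ range P, (X (cstarParent (r + 1) l (r + l + j + 1)) + X (r + l + j + 1)) ^ 2 =
        ∑ j ∈ range P, (p l + g j) ^ 2 :=
    sum_congr rfl fun j hj ↦ by
      rw [show r + l + j + 1 = r + 1 + l + j by ring, h.apply_cstarParent_pendant r.succ_pos,
        h.pendant j (mem_range.1 hj)]
  rw [show r + 1 + l + P - 1 = r + l + P by omega, sum_range_add, sum_range_add, hcycle, hpath,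
    hpendant, cstarEnergy, sum_range_succ, h.closed, h.cycle 0 (by omega), h.cycle _ (by omega),
    Nat.add_sub_cancel]
  ring

theorem IsCstarProfile.normSq_eq {X c p g : ℕ → ℝ} (h : IsCstarProfile s l P X c p g) :
    (fun i : Fin (s + l + P) ↦ X i) ⬝ᵥ (fun i : Fin (s + l + P) ↦ X i) =
      cstarNormSq s l P c p g := by
  simp only [dotProduct, ← pow_two]
  rw [Fin.sum_univ_eq_sum_range fun i ↦ X i ^ 2, sum_range_add, sum_range_add, cstarNormSq]
  congr 1
  · congr 1
    · exact sum_congr rfl fun i hi ↦ by rw [h.cycle i (mem_range.1 hi)]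
    · exact sum_congr rfl fun i hi ↦ by rw [h.path i (mem_range.1 hi)]
  · exact sum_congr rfl fun j hj ↦ by rw [h.pendant j (mem_range.1 hj)]

theorem exists_vector_isCstarProfile {c p : ℕ → ℝ} (hc : c s = c 0) (hp : p 0 = c 0) (g : ℕ → ℝ) :
    ∃ X, IsCstarProfile s l P X c p g := by
  refine ⟨fun i ↦ if i < s then c i else if i < s + l then p (i - s + 1) else g (i - (s + l)),
    fun i hi ↦ if_pos hi, hc, hp, fun i hi ↦ ?_, fun j _ ↦ ?_⟩
  · rw [if_neg (by omega), if_pos (by omega), Nat.add_sub_cancel_left]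
  · rw [if_neg (by omega), if_neg (by omega), Nat.add_sub_cancel_left]

theorem qmin_Cstar_mul_normSq_le (hs : 3 ≤ s) {c p : ℕ → ℝ} (hc : c s = c 0) (hp : p 0 = c 0)
    (g : ℕ → ℝ) :
    qmin (Cstar (s + l + P) s l) * cstarNormSq s l P c p g ≤ cstarEnergy s l P c p g := by
  obtain ⟨X, hX⟩ := exists_vector_isCstarProfile (l := l) (P := P) hc hp g
  rw [← hX.normSq_eq, ← hX.energy_eq hs]
  exact qmin_mul_dotProduct_self_le _ _

/-- The reflection of the cycle `0, …, s - 1` that fixes `0`. -/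
def cycleReflect (s i : ℕ) : ℕ := if 0 < i ∧ i < s then s - i else i

theorem cycleReflect_involutive (s : ℕ) : Function.Involutive (cycleReflect s) := by
  intro i
  unfold cycleReflect
  split_ifs <;> omega

theorem cycleReflect_lt {n : ℕ} (hn : s ≤ n) {i : ℕ} (hi : i < n) : cycleReflect s i < n := by
  unfold cycleReflect
  split_ifs <;> omega

theorem cstarRel_cycleReflect (hs : 3 ≤ s) {a b : ℕ} (h : cstarRel s l a b) :
    cstarRel s l (cycleReflect s a) (cycleReflect s b) ∨
      cstarRel s l (cycleReflect s b) (cycleReflect s a) := by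
  have hfixed : ∀ i, i = 0 ∨ s ≤ i → cycleReflect s i = i := fun i hi ↦ if_neg (by omega)
  have hreflect : ∀ i, 0 < i → i < s → cycleReflect s i = s - i := fun i hi his ↦ if_pos ⟨hi, his⟩
  rcases h with ⟨rfl, hb⟩ | ⟨rfl, rfl⟩ | ⟨hl, rfl, rfl⟩ | ⟨rfl, ha, hb⟩ | ⟨ha, hb⟩
  · rw [hreflect (a + 1) (by omega) hb]
    rcases a.eq_zero_or_pos with rfl | ha
    · rw [hfixed 0 (.inl rfl)]
      exact .inl (.inr (.inl ⟨rfl, rfl⟩))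
    · rw [hreflect a ha (by omega)]
      exact .inr (.inl (by omega))
  · rw [hfixed 0 (.inl rfl), hreflect (s - 1) (by omega) (by omega)]
    exact .inl (.inl (by omega))
  · rw [hfixed 0 (.inl rfl), hfixed b (.inr le_rfl)]
    exact .inl (.inr (.inr (.inl ⟨hl, rfl, rfl⟩)))
  · rw [hfixed a (.inr ha), hfixed (a + 1) (.inr (by omega))]
    exact .inl (.inr (.inr (.inr (.inl ⟨rfl, ha, hb⟩))))
  · rw [hfixed a (by split_ifs at ha <;> omega), hfixed b (.inr (by omega))]
    exact .inl (.inr (.inr (.inr (.inr ⟨ha, hb⟩))))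

/-- The automorphism of `C*_{s,l}` that reflects the cycle. -/
def cstarReflect (hs : 3 ≤ s) {n : ℕ} (hn : s ≤ n) : Cstar n s l ≃g Cstar n s l where
  toFun i := ⟨cycleReflect s i, cycleReflect_lt hn i.isLt⟩
  invFun i := ⟨cycleReflect s i, cycleReflect_lt hn i.isLt⟩
  left_inv i := Fin.ext (cycleReflect_involutive s i)
  right_inv i := Fin.ext (cycleReflect_involutive s i)
  map_rel_iff' {i j} := by
    have himp : ∀ a b, cstarRel s l a b ∨ cstarRel s l b a →
        cstarRel s l (cycleReflect s a) (cycleReflect s b) ∨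
          cstarRel s l (cycleReflect s b) (cycleReflect s a) := fun a b h ↦
      h.elim (cstarRel_cycleReflect hs) fun h ↦ (cstarRel_cycleReflect hs h).symm
    rw [Cstar_adj_iff hs, Cstar_adj_iff hs]
    refine ⟨fun h ↦ ?_, himp i j⟩
    have h' := himp (cycleReflect s i) (cycleReflect s j) h
    rwa [cycleReflect_involutive s i, cycleReflect_involutive s j] at h'

theorem exists_isCstarProfile (X : ℕ → ℝ) : ∃ c p g, IsCstarProfile s l P X c p g :=
  ⟨fun i ↦ if i < s then X i else X 0, fun i ↦ if i = 0 then X 0 else X (s + i - 1),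
    fun j ↦ X (s + l + j), fun i hi ↦ (if_pos hi).symm,
    by simp only [lt_irrefl, if_false, ite_self],
    by simp only [if_true, ite_self], fun i _ ↦ by rw [if_neg i.succ_ne_zero]; rfl, fun j _ ↦ rfl⟩

/-- The vector on `C*_{s,l}` with values `c`, `p`, `g` as in `IsCstarProfile` is multiplied by `ε`
when the cycle is reflected. -/
structure IsReflectEigenprofile (s l P : ℕ) (ε : ℝ) (c p g : ℕ → ℝ) : Prop where
  root : p 0 = c 0
  cycle : ∀ i ≤ s, c (s - i) = ε * c i
  path : ∀ i ≤ l, p i = ε * p i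
  pendant : ∀ j < P, g j = ε * g j

theorem IsCstarProfile.isReflectEigenprofile {X c p g : ℕ → ℝ} {ε : ℝ}
    (h : IsCstarProfile s l P X c p g) (hs : 0 < s)
    (hX : ∀ i < s + l + P, X (cycleReflect s i) = ε * X i) :
    IsReflectEigenprofile s l P ε c p g := by
  have hfixed : ∀ i < s + l + P, i = 0 ∨ s ≤ i → X i = ε * X i := fun i hi hi' ↦ by
    rw [← hX i hi, cycleReflect, if_neg (by omega)]
  have hzero : c 0 = ε * c 0 := by
    rw [← h.cycle 0 hs]
    exact hfixed 0 (by omega) (.inl rfl)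
  refine ⟨h.root, fun i hi ↦ ?_, fun i hi ↦ ?_, fun j hj ↦ ?_⟩
  · rcases i.eq_zero_or_pos with rfl | hi0
    · rwa [Nat.sub_zero, h.closed]
    rcases hi.eq_or_lt with rfl | his
    · rwa [Nat.sub_self, h.closed]
    · rw [← h.cycle i his, ← h.cycle _ (by omega), ← hX i (by omega), cycleReflect,
        if_pos ⟨hi0, his⟩]
  · rcases i with _ | i
    · rwa [h.root]
    · rw [← h.path i hi]
      exact hfixed _ (by omega) (.inr (by omega))
  · rw [← h.pendant j hj]
    exact hfixed _ (by omega) (.inr (by omega))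

theorem exists_isReflectEigenprofile_energy_eq_qmin (hs : 3 ≤ s) (l P : ℕ) :
    ∃ ε c p g, (ε = 1 ∨ ε = -1) ∧ IsReflectEigenprofile s l P ε c p g ∧
      0 < cstarNormSq s l P c p g ∧
      cstarEnergy s l P c p g = qmin (Cstar (s + l + P) s l) * cstarNormSq s l P c p g := by
  have : Nonempty (Fin (s + l + P)) := ⟨⟨0, by omega⟩⟩
  obtain ⟨x, ε, hx, hxq, hε, hxε⟩ := exists_eigenvector_qmin_comp_involution _
    (cstarReflect (l := l) hs (show s ≤ s + l + P by omega))
    fun i ↦ Fin.ext (cycleReflect_involutive s i)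
  let X : ℕ → ℝ := fun i ↦ if h : i < s + l + P then x ⟨i, h⟩ else 0
  have hX : (fun i : Fin (s + l + P) ↦ X i) = x := funext fun i ↦ dif_pos i.isLt
  obtain ⟨c, p, g, h⟩ := exists_isCstarProfile (s := s) (l := l) (P := P) X
  have hnorm := h.normSq_eq
  have henergy := h.energy_eq hs
  rw [hX] at hnorm henergy
  refine ⟨ε, c, p, g, sq_eq_one_iff.1 hε, h.isReflectEigenprofile (by omega) ?_, ?_, ?_⟩
  · intro i hi
    have hi' := cycleReflect_lt (show s ≤ s + l + P by omega) hi
    simp only [X, dif_pos hi, dif_pos hi']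
    exact congrFun hxε ⟨i, hi⟩
  · rw [← hnorm]
    simpa only [star_trivial] using dotProduct_star_self_pos_iff.2 hx
  · rw [← hnorm, ← henergy, hxq, dotProduct_smul, smul_eq_mul]

theorem sum_range_add_of_symm {M : Type*} [AddCommMonoid M] {a b : ℕ} {h : ℕ → M}
    (hsymm : ∀ i < b, h (a + b - 1 - i) = h i) :
    ∑ i ∈ range (a + b), h i = ∑ i ∈ range a, h i + ∑ i ∈ range b, h i := by
  rw [sum_range_add, ← sum_range_reflect fun i ↦ h (a + i)]
  congr 1
  refine sum_congr rfl fun i hi ↦ ?_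
  have hi := mem_range.1 hi
  rw [← hsymm i hi]
  congr 1
  omega

theorem IsReflectEigenprofile.sum_cycle_energy {k : ℕ} {ε : ℝ} {c p g : ℕ → ℝ}
    (h : IsReflectEigenprofile (2 * k + 1) l P ε c p g) (hε : ε ^ 2 = 1) :
    ∑ i ∈ range (2 * k + 1), (c i + c (i + 1)) ^ 2 =
      2 * ∑ i ∈ range k, (c i + c (i + 1)) ^ 2 + ((1 + ε) * c k) ^ 2 := by
  have hmiddle : c (k + 1) = ε * c k := by
    rw [← h.cycle k (by omega)]
    congr 1
    omega
  rw [show 2 * k + 1 = k + 1 + k by ring, sum_range_add_of_symm, sum_range_succ, hmiddle]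
  · ring
  · intro i hi
    rw [show k + 1 + k - 1 - i = 2 * k + 1 - (i + 1) by omega,
      show 2 * k + 1 - (i + 1) + 1 = 2 * k + 1 - i by omega, h.cycle _ (by omega),
      h.cycle _ (by omega), ← mul_add, mul_pow, hε, one_mul, add_comm]

theorem IsReflectEigenprofile.sum_cycle_sq {k : ℕ} {ε : ℝ} {c p g : ℕ → ℝ}
    (h : IsReflectEigenprofile (2 * k + 1) l P ε c p g) (hε : ε ^ 2 = 1) :
    ∑ i ∈ range (2 * k + 1), c i ^ 2 = c 0 ^ 2 + 2 * ∑ i ∈ range k, c (i + 1) ^ 2 := by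
  rw [sum_range_succ', show 2 * k = k + k by ring, sum_range_add_of_symm]
  · ring
  · intro i hi
    rw [show k + k - 1 - i + 1 = 2 * k + 1 - (i + 1) by omega, h.cycle _ (by omega), mul_pow, hε,
      one_mul]

end CstarForm

section Triangle

/-- The quadratic form of the signless Laplacian of `C*_{3,t}` with `P` pendant vertices, in
coordinates whose signs alternate along the graph: `S 0` and `w` are the values on the triangle
vertices of degree two, `S 1, …, S (t + 1)` those on the path starting at the third triangle vertex,
and `G` those on the pendant vertices. In these coordinates only the edge between `S 0` and `w`
contributes the square of a sum. -/
def triangleEnergy (t P : ℕ) (w : ℝ) (S G : ℕ → ℝ) : ℝ :=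
  (S 0 + w) ^ 2 + (S 1 - w) ^ 2 + ∑ i ∈ range (t + 1), (S i - S (i + 1)) ^ 2 +
    ∑ j ∈ range P, (S (t + 1) - G j) ^ 2

/-- The squared Euclidean norm of the vector on `C*_{3,t}` described in `triangleEnergy`. -/
def triangleNormSq (t P : ℕ) (w : ℝ) (S G : ℕ → ℝ) : ℝ :=
  w ^ 2 + ∑ i ∈ range (t + 2), S i ^ 2 + ∑ j ∈ range P, G j ^ 2

theorem qmin_Cstar_three_mul_triangleNormSq_le (t P : ℕ) (w : ℝ) (S G : ℕ → ℝ) :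
    qmin (Cstar (3 + t + P) 3 t) * triangleNormSq t P w S G ≤ triangleEnergy t P w S G := by
  let c : ℕ → ℝ := fun i ↦ if i = 1 then -S 0 else if i = 2 then -w else S 1
  let p : ℕ → ℝ := fun i ↦ (-1) ^ i * S (i + 1)
  let g : ℕ → ℝ := fun j ↦ -(-1) ^ t * G j
  have hsign : ∀ i : ℕ, ((-1 : ℝ) ^ i) ^ 2 = 1 := fun i ↦ by
    rw [← pow_mul', pow_mul, neg_one_sq, one_pow]
  have hnorm : cstarNormSq 3 t P c p g = triangleNormSq t P w S G := by
    simp only [cstarNormSq, triangleNormSq, sum_range_succ' _ (t + 1), sum_range_succ' _ t,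
      sum_range_succ, sum_range_zero, c, p, g, mul_pow, hsign, neg_sq]
    norm_num
    ring
  have henergy : cstarEnergy 3 t P c p g = triangleEnergy t P w S G := by
    have hpath : ∀ i, (p i + p (i + 1)) ^ 2 = (S (i + 1) - S (i + 2)) ^ 2 := fun i ↦ by
      linear_combination (S (i + 1) - S (i + 2)) ^ 2 * hsign i
    have hpendant : ∀ j, (p t + g j) ^ 2 = (S (t + 1) - G j) ^ 2 := fun j ↦ by
      linear_combination (S (t + 1) - G j) ^ 2 * hsign t
    simp only [cstarEnergy, triangleEnergy, hpath, hpendant, sum_range_succ' _ t, sum_range_succ,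
      sum_range_zero, c]
    norm_num
    ring
  rw [← hnorm, ← henergy]
  exact qmin_Cstar_mul_normSq_le le_rfl rfl (by simp [c, p]) g

theorem qmin_Cstar_three_lt_one (t P : ℕ) : qmin (Cstar (3 + t + (P + 1)) 3 t) < 1 := by
  let S : ℕ → ℝ := fun i ↦ if i = 0 then 1 / 2 else 1
  have h := qmin_Cstar_three_mul_triangleNormSq_le t (P + 1) (1 / 2) S fun _ ↦ 1
  have henergy : triangleEnergy t (P + 1) (1 / 2) S (fun _ ↦ 1) = 3 / 2 := by
    simp only [triangleEnergy, sum_range_succ' _ t, S]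
    norm_num
  have hnorm : triangleNormSq t (P + 1) (1 / 2) S (fun _ ↦ 1) = t + P + 5 / 2 := by
    simp only [triangleNormSq, sum_range_succ' _ (t + 1), S]
    norm_num
    ring
  rw [henergy, hnorm] at h
  by_contra! hq
  have : (0 : ℝ) ≤ t + P := by positivity
  nlinarith

variable {t P r : ℕ} {w : ℝ} {S G : ℕ → ℝ}

theorem qmin_Cstar_three_mul_eq_zero_of_pendant_eq (hG : G P = S (t + 1))
    (h : triangleEnergy t (P + 1) w S G =
      qmin (Cstar (3 + t + (P + 1)) 3 t) * triangleNormSq t (P + 1) w S G) :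
    qmin (Cstar (3 + t + (P + 1)) 3 t) * S (t + 1) = 0 := by
  set q := qmin (Cstar (3 + t + (P + 1)) 3 t)
  -- As a function of `G P`, the energy minus `q` times the squared norm has derivative `-2 * δ`.
  let δ := q * S (t + 1)
  let G' : ℕ → ℝ := fun j ↦ if j < P then G j else G P + δ
  have hsum : ∀ φ : ℝ → ℝ, ∑ j ∈ range P, φ (G' j) = ∑ j ∈ range P, φ (G j) := fun φ ↦
    sum_congr rfl fun j hj ↦ congrArg φ (if_pos (mem_range.1 hj))
  have hG'P : G' P = S (t + 1) + δ := by rw [← hG]; exact if_neg (lt_irrefl P)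
  have henergy : triangleEnergy t (P + 1) w S G' = triangleEnergy t (P + 1) w S G + δ ^ 2 := by
    rw [triangleEnergy, triangleEnergy, sum_range_succ _ P, sum_range_succ _ P, hG, hG'P,
      hsum fun y ↦ (S (t + 1) - y) ^ 2]
    ring
  have hnorm : triangleNormSq t (P + 1) w S G' =
      triangleNormSq t (P + 1) w S G + 2 * S (t + 1) * δ + δ ^ 2 := by
    rw [triangleNormSq, triangleNormSq, sum_range_succ _ P, sum_range_succ _ P, hG, hG'P,
      hsum fun y ↦ y ^ 2]
    ring
  have hperturb := qmin_Cstar_three_mul_triangleNormSq_le t (P + 1) w S G'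
  rw [henergy, hnorm, h] at hperturb
  have hδ : δ ^ 2 ≤ 0 := by
    have hq : 0 ≤ q * δ ^ 2 := mul_nonneg (qmin_nonneg _) (sq_nonneg δ)
    linear_combination hperturb + hq
  exact pow_eq_zero_iff two_ne_zero |>.1 (hδ.antisymm (sq_nonneg δ))

theorem last_eq_zero_of_triangleEnergy_eq_zero (hS0 : 0 ≤ S 0) (hw : 0 ≤ w)
    (h : triangleEnergy t P w S G = 0) : S (t + 1) = 0 := by
  have hpath : 0 ≤ ∑ i ∈ range (t + 1), (S i - S (i + 1)) ^ 2 :=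
    sum_nonneg fun i _ ↦ sq_nonneg _
  have hpendant : 0 ≤ ∑ j ∈ range P, (S (t + 1) - G j) ^ 2 := sum_nonneg fun j _ ↦ sq_nonneg _
  rw [triangleEnergy] at h
  have hedge : S 0 = 0 := by nlinarith [sq_nonneg (S 1 - w)]
  have hconst : ∑ i ∈ range (t + 1), (S i - S (i + 1)) ^ 2 = 0 := by
    nlinarith [sq_nonneg (S 1 - w), sq_nonneg (S 0 + w)]
  have hstep : ∀ i ∈ range (t + 1), S i - S (i + 1) = 0 := fun i hi ↦
    pow_eq_zero_iff two_ne_zero |>.1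
      ((sum_eq_zero_iff_of_nonneg fun i _ ↦ sq_nonneg _).1 hconst i hi)
  have htele := sum_range_sub' S (t + 1)
  rw [sum_eq_zero hstep, hedge] at htele
  linarith

theorem qmin_Cstar_three_mul_triangleNormSq_lt (hS : Monotone S) (hS0 : 0 ≤ S 0) (hw : 0 ≤ w)
    (hwS : w ≤ S 1) (hG : G P = S (t + 1)) (hpos : 0 < triangleNormSq t (P + 1) w S G) :
    qmin (Cstar (3 + t + (P + 1)) 3 t) * triangleNormSq t (P + 1) w S G <
      triangleEnergy t (P + 1) w S G := by
  refine (qmin_Cstar_three_mul_triangleNormSq_le t (P + 1) w S G).lt_of_ne fun h ↦ ?_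
  have hend : S (t + 1) = 0 := by
    rcases mul_eq_zero.1 (qmin_Cstar_three_mul_eq_zero_of_pendant_eq hG h.symm) with hq | hend
    · rw [hq, zero_mul] at h
      exact last_eq_zero_of_triangleEnergy_eq_zero hS0 hw h.symm
    · exact hend
  have hS_zero : ∀ i ≤ t + 1, S i = 0 := fun i hi ↦
    ((hS hi).trans_eq hend).antisymm (hS0.trans (hS i.zero_le))
  have hw_zero : w = 0 := (hwS.trans_eq (hS_zero 1 (by omega))).antisymm hw
  -- Only the pendant vertices carry values, so the Rayleigh quotient is one.
  have hquotient : triangleEnergy t (P + 1) w S G = triangleNormSq t (P + 1) w S G := by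
    have hdiff : ∀ i ∈ range (t + 1), (S i - S (i + 1)) ^ 2 = 0 := fun i hi ↦ by
      rw [hS_zero i (mem_range.1 hi).le, hS_zero (i + 1) (mem_range.1 hi), sub_self,
        zero_pow two_ne_zero]
    have hsq : ∀ i ∈ range (t + 2), S i ^ 2 = 0 := fun i hi ↦ by
      rw [hS_zero i (Nat.lt_succ_iff.1 (mem_range.1 hi)), zero_pow two_ne_zero]
    rw [triangleEnergy, triangleNormSq, sum_eq_zero hdiff, sum_eq_zero hsq, hw_zero, hend,
      hS_zero 0 (by omega), hS_zero 1 (by omega)]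
    simp only [zero_sub, neg_sq, sub_zero, add_zero, zero_pow two_ne_zero]
  rw [hquotient] at h
  exact (mul_lt_of_lt_one_left hpos (qmin_Cstar_three_lt_one t P)).ne h

theorem partialSups_sub_sq_le (f : ℕ → ℝ) (i : ℕ) :
    (partialSups f i - partialSups f (i + 1)) ^ 2 ≤ (f i - f (i + 1)) ^ 2 := by
  rw [← Order.succ_eq_add_one, partialSups_succ, Order.succ_eq_add_one]
  have hi := le_partialSups f i
  rcases le_total (f (i + 1)) (partialSups f i) with h | h
  · rw [sup_eq_left.2 h, sub_self, zero_pow two_ne_zero]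
    exact sq_nonneg _
  · rw [sup_eq_right.2 h]
    rw [sq_le_sq, abs_sub_comm, abs_of_nonneg (sub_nonneg.2 h)]
    exact (sub_le_sub_left hi _).trans (neg_sub (f i) _ ▸ neg_le_abs _)

theorem sub_max_abs_sq_le {m M : ℝ} (hm : |m| ≤ M) (a : ℝ) :
    (M - max |a| M) ^ 2 ≤ (m + a) ^ 2 := by
  rcases le_total |a| M with h | h
  · rw [max_eq_right h, sub_self, zero_pow two_ne_zero]
    exact sq_nonneg _
  · rw [max_eq_left h, sq_le_sq, abs_sub_comm, abs_of_nonneg (sub_nonneg.2 h), add_comm m]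
    have := abs_sub_abs_le_abs_sub a (-m)
    rw [abs_neg, sub_neg_eq_add] at this
    linarith

theorem abs_sub_abs_sq_le (x y : ℝ) : (|x| - |y|) ^ 2 ≤ (x + y) ^ 2 := by
  rw [← sub_neg_eq_add, ← abs_neg y]
  exact sq_le_sq.2 (abs_abs_sub_abs_le_abs_sub x (-y))

/-- The running maximum `S` of `f` and the values `max |g j| (S (t + 1))` on the pendant vertices
only lower the energy, and `S (t + 1)` on further pendant vertices is free. -/
theorem qmin_Cstar_three_mul_lt_of_trunk {f g h : ℕ → ℝ} {m : ℝ} (hf : ∀ i, 0 ≤ f i) (hw : 0 ≤ w)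
    (hwf : w ≤ partialSups f 1) (hm : |m| ≤ partialSups f (t + 1))
    (hh : ∀ j < r + 1, |h j| ≤ partialSups f (t + 1))
    (hpos : 0 < w ^ 2 + ∑ i ∈ range (t + 2), f i ^ 2 + ∑ j ∈ range P, g j ^ 2 +
      ∑ j ∈ range (r + 1), h j ^ 2) :
    qmin (Cstar (3 + t + (P + (r + 1))) 3 t) *
        (w ^ 2 + ∑ i ∈ range (t + 2), f i ^ 2 + ∑ j ∈ range P, g j ^ 2 +
          ∑ j ∈ range (r + 1), h j ^ 2) <
      (f 0 + w) ^ 2 + (partialSups f 1 - w) ^ 2 + ∑ i ∈ range (t + 1), (f i - f (i + 1)) ^ 2 +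
        ∑ j ∈ range P, (m + g j) ^ 2 := by
  set S := partialSups f
  let M := S (t + 1)
  let G : ℕ → ℝ := fun j ↦ if j < P then max |g j| M else M
  have hG : ∀ j ∈ range P, G j = max |g j| M := fun j hj ↦ if_pos (mem_range.1 hj)
  have hGr : ∀ j, G (P + j) = M := fun j ↦ if_neg (by omega)
  have hS0 : S 0 = f 0 := partialSups_zero f
  have hnorm : w ^ 2 + ∑ i ∈ range (t + 2), f i ^ 2 + ∑ j ∈ range P, g j ^ 2 +
      ∑ j ∈ range (r + 1), h j ^ 2 ≤ triangleNormSq t (P + (r + 1)) w S G := by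
    rw [triangleNormSq, sum_range_add _ P, ← add_assoc]
    refine add_le_add (add_le_add (add_le_add_right (sum_le_sum fun i _ ↦ ?_) _)
      (sum_le_sum fun j hj ↦ ?_)) (sum_le_sum fun j hj ↦ ?_)
    · exact pow_le_pow_left₀ (hf i) (le_partialSups f i) 2
    · rw [hG j hj, sq_le_sq]
      exact (le_max_left _ _).trans (le_abs_self _)
    · rw [hGr, sq_le_sq]
      exact (hh j (mem_range.1 hj)).trans (le_abs_self _)
  have henergy : triangleEnergy t (P + (r + 1)) w S G ≤
      (f 0 + w) ^ 2 + (S 1 - w) ^ 2 + ∑ i ∈ range (t + 1), (f i - f (i + 1)) ^ 2 +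
        ∑ j ∈ range P, (m + g j) ^ 2 := by
    rw [triangleEnergy, sum_range_add _ P, hS0]
    simp only [hGr, M, sub_self, zero_pow two_ne_zero, sum_const_zero, add_zero]
    refine add_le_add (add_le_add_right (sum_le_sum fun i _ ↦ partialSups_sub_sq_le f i) _)
      (sum_le_sum fun j hj ↦ ?_)
    rw [hG j hj]
    exact sub_max_abs_sq_le hm (g j)
  calc _ ≤ _ := mul_le_mul_of_nonneg_left hnorm (qmin_nonneg _)
    _ < _ := qmin_Cstar_three_mul_triangleNormSq_lt S.monotone (hS0 ▸ hf 0) hw hwf (hGr r)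
      (hpos.trans_le hnorm)
    _ ≤ _ := henergy

end Triangle

section Comparison

/-- The values `c k, c (k - 1), …, c 1, p 0, p 1, …` along the path that goes from the middle of the
cycle back to the vertex `0` and then down the attached path. -/
def halfCycleTrunk (k : ℕ) (c p : ℕ → ℝ) (i : ℕ) : ℝ := if i < k then c (k - i) else p (i - k)

variable {l P k r : ℕ} {c p g : ℕ → ℝ}

theorem halfCycleTrunk_add (k : ℕ) (c p : ℕ → ℝ) (i : ℕ) : halfCycleTrunk k c p (k + i) = p i := by
  rw [halfCycleTrunk, if_neg (by omega), Nat.add_sub_cancel_left]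

theorem halfCycleTrunk_sub (hroot : p 0 = c 0) {j : ℕ} (hj : j ≤ k) :
    halfCycleTrunk k c p (k - j) = c j := by
  rcases j.eq_zero_or_pos with rfl | hj0
  · exact (halfCycleTrunk_add k c p 0).trans hroot
  · rw [halfCycleTrunk, if_pos (by omega), Nat.sub_sub_self hj]

theorem sum_halfCycleTrunk_add_sq (hroot : p 0 = c 0) :
    ∑ i ∈ range (k + l), (halfCycleTrunk k c p i + halfCycleTrunk k c p (i + 1)) ^ 2 =
      ∑ i ∈ range k, (c i + c (i + 1)) ^ 2 + ∑ i ∈ range l, (p i + p (i + 1)) ^ 2 := by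
  rw [sum_range_add, ← sum_range_reflect]
  congr 1
  · refine sum_congr rfl fun i hi ↦ ?_
    have hi := mem_range.1 hi
    rw [show k - 1 - i = k - (i + 1) by omega, show k - (i + 1) + 1 = k - i by omega,
      halfCycleTrunk_sub hroot hi, halfCycleTrunk_sub hroot hi.le, add_comm]
  · simp only [add_assoc, halfCycleTrunk_add]

theorem sum_halfCycleTrunk_sq (hroot : p 0 = c 0) :
    ∑ i ∈ range (k + l + 1), halfCycleTrunk k c p i ^ 2 =
      c 0 ^ 2 + ∑ i ∈ range k, c (i + 1) ^ 2 + ∑ i ∈ range l, p (i + 1) ^ 2 := by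
  rw [add_assoc, sum_range_add, ← sum_range_reflect, sum_range_succ' _ l]
  simp only [halfCycleTrunk_add]
  rw [hroot, sum_congr rfl fun i hi ↦ by
    rw [show k - 1 - i = k - (i + 1) by grind, halfCycleTrunk_sub hroot (mem_range.1 hi)]]
  ring

theorem IsReflectEigenprofile.energy_eq_of_symm
    (h : IsReflectEigenprofile (2 * k + 1) l P 1 c p g) :
    cstarEnergy (2 * k + 1) l P c p g =
      (2 * c k) ^ 2 + ∑ i ∈ range k, (c i + c (i + 1)) ^ 2 +
        ∑ i ∈ range (k + l), (halfCycleTrunk k c p i + halfCycleTrunk k c p (i + 1)) ^ 2 +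
        ∑ j ∈ range P, (p l + g j) ^ 2 := by
  rw [cstarEnergy, h.sum_cycle_energy (one_pow 2), sum_halfCycleTrunk_add_sq h.root]
  ring

theorem IsReflectEigenprofile.normSq_eq_of_symm
    (h : IsReflectEigenprofile (2 * k + 1) l P 1 c p g) :
    cstarNormSq (2 * k + 1) l P c p g =
      ∑ i ∈ range k, c (i + 1) ^ 2 + ∑ i ∈ range (k + l + 1), halfCycleTrunk k c p i ^ 2 +
        ∑ j ∈ range P, g j ^ 2 := by
  rw [cstarNormSq, h.sum_cycle_sq (one_pow 2), sum_halfCycleTrunk_sq h.root]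
  ring

theorem partialSups_abs_sub_abs_sq_le (u : ℕ → ℝ) :
    (partialSups (fun i ↦ |u i|) 1 - |u 0|) ^ 2 ≤ (u 0 + u 1) ^ 2 := by
  have h := partialSups_sub_sq_le (fun i ↦ |u i|) 0
  rw [partialSups_zero, ← neg_sub, neg_sq] at h
  exact h.trans (abs_sub_abs_sq_le _ _)

theorem IsReflectEigenprofile.trunk_energy_le_of_symm
    (h : IsReflectEigenprofile (2 * (k + 1) + 1) l P 1 c p g) {u : ℕ → ℝ}
    (hu : u = halfCycleTrunk (k + 1) c p) :
    (|u 0| + |u 0|) ^ 2 + (partialSups (fun i ↦ |u i|) 1 - |u 0|) ^ 2 +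
        ∑ i ∈ range (k + 1 + l), (|u i| - |u (i + 1)|) ^ 2 + ∑ j ∈ range P, (p l + g j) ^ 2 ≤
      cstarEnergy (2 * (k + 1) + 1) l P c p g := by
  have hu0 : u 0 = c (k + 1) := by
    rw [hu, ← halfCycleTrunk_sub h.root le_rfl, Nat.sub_self]
  have hu1 : u 1 = c k := by
    rw [hu, ← halfCycleTrunk_sub h.root (Nat.le_add_right k 1), Nat.add_sub_cancel_left]
  have hslope : (partialSups (fun i ↦ |u i|) 1 - |u 0|) ^ 2 ≤
      ∑ i ∈ range (k + 1), (c i + c (i + 1)) ^ 2 := by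
    refine (partialSups_abs_sub_abs_sq_le u).trans ?_
    rw [hu0, hu1, add_comm]
    exact single_le_sum (f := fun i ↦ (c i + c (i + 1)) ^ 2) (fun i _ ↦ sq_nonneg _)
      (self_mem_range_succ k)
  rw [h.energy_eq_of_symm, ← hu0, ← hu, ← two_mul, mul_pow, mul_pow, sq_abs]
  gcongr (_ + ?_ + ∑ i ∈ _, ?_) + _
  exact abs_sub_abs_sq_le _ _

theorem qmin_Cstar_three_mul_normSq_lt_of_symm
    (h : IsReflectEigenprofile (2 * (r + 2) + 1) l P 1 c p g)
    (hpos : 0 < cstarNormSq (2 * (r + 2) + 1) l P c p g) :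
    qmin (Cstar (3 + (l + r + 1) + (P + (r + 1))) 3 (l + r + 1)) *
        cstarNormSq (2 * (r + 2) + 1) l P c p g < cstarEnergy (2 * (r + 2) + 1) l P c p g := by
  let u := halfCycleTrunk (r + 2) c p
  let S := partialSups fun i ↦ |u i|
  have hu : ∀ j ≤ r + 2, u (r + 2 - j) = c j := fun j ↦ halfCycleTrunk_sub h.root
  have hu0 : u 0 = c (r + 2) := Nat.sub_self (r + 2) ▸ hu (r + 2) le_rfl
  have hS : ∀ i ≤ l + r + 2, |u i| ≤ S (l + r + 2) := fun i ↦ le_partialSups_of_le fun i ↦ |u i|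
  have hm : |p l| ≤ S (l + r + 2) := by
    rw [← halfCycleTrunk_add (r + 2) c p l]
    exact hS _ (by omega)
  have hh : ∀ j < r + 1, |c (j + 1)| ≤ S (l + r + 2) := fun j hj ↦ by
    rw [← hu (j + 1) (by omega)]
    exact hS _ (by omega)
  have hnorm : cstarNormSq (2 * (r + 2) + 1) l P c p g =
      |u 0| ^ 2 + ∑ i ∈ range (l + r + 1 + 2), |u i| ^ 2 + ∑ j ∈ range P, g j ^ 2 +
        ∑ j ∈ range (r + 1), c (j + 1) ^ 2 := by
    rw [h.normSq_eq_of_symm, sum_range_succ _ (r + 1), show r + 2 + l + 1 = l + r + 1 + 2 by ring]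
    simp only [sq_abs, hu0]
    ring
  have henergy := h.trunk_energy_le_of_symm rfl
  rw [show r + 1 + 1 + l = l + r + 1 + 1 by ring] at henergy
  rw [hnorm] at hpos ⊢
  exact (qmin_Cstar_three_mul_lt_of_trunk (fun i ↦ abs_nonneg _) (abs_nonneg _)
    (le_partialSups_of_le (fun i ↦ |u i|) zero_le_one) hm hh hpos).trans_le henergy

theorem IsReflectEigenprofile.cycle_zero_of_antisymm {s : ℕ}
    (h : IsReflectEigenprofile s l P (-1) c p g) : c 0 = 0 := by
  rw [← h.root]
  linarith [h.path 0 l.zero_le]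

theorem IsReflectEigenprofile.energy_eq_of_antisymm
    (h : IsReflectEigenprofile (2 * k + 1) l P (-1) c p g) :
    cstarEnergy (2 * k + 1) l P c p g = 2 * ∑ i ∈ range k, (c i + c (i + 1)) ^ 2 := by
  have hp : ∀ i ≤ l, p i = 0 := fun i hi ↦ by linarith [h.path i hi]
  have hpath : ∑ i ∈ range l, (p i + p (i + 1)) ^ 2 = 0 := sum_eq_zero fun i hi ↦ by
    rw [hp i (mem_range.1 hi).le, hp (i + 1) (mem_range.1 hi), add_zero, zero_pow two_ne_zero]
  have hpendant : ∑ j ∈ range P, (p l + g j) ^ 2 = 0 := sum_eq_zero fun j hj ↦ by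
    rw [hp l le_rfl, zero_add, sq_eq_zero_iff]
    linarith [h.pendant j (mem_range.1 hj)]
  rw [cstarEnergy, h.sum_cycle_energy neg_one_pow_two, hpath, hpendant]
  ring

theorem IsReflectEigenprofile.normSq_eq_of_antisymm
    (h : IsReflectEigenprofile (2 * k + 1) l P (-1) c p g) :
    cstarNormSq (2 * k + 1) l P c p g = 2 * ∑ i ∈ range k, c (i + 1) ^ 2 := by
  have hpath : ∑ i ∈ range l, p (i + 1) ^ 2 = 0 := sum_eq_zero fun i hi ↦ by
    rw [sq_eq_zero_iff]
    linarith [h.path (i + 1) (mem_range.1 hi)]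
  have hpendant : ∑ j ∈ range P, g j ^ 2 = 0 := sum_eq_zero fun j hj ↦ by
    rw [sq_eq_zero_iff]
    linarith [h.pendant j (mem_range.1 hj)]
  rw [cstarNormSq, h.sum_cycle_sq neg_one_pow_two, h.cycle_zero_of_antisymm, hpath, hpendant]
  ring

theorem sum_abs_comp_min_sub_sq_le (c : ℕ → ℝ) (k l : ℕ) :
    ∑ i ∈ range (k + l), (|c (min i k)| - |c (min (i + 1) k)|) ^ 2 ≤
      ∑ i ∈ range k, (c i + c (i + 1)) ^ 2 := by
  rw [sum_range_add, sum_eq_zero (s := range l), add_zero]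
  · refine sum_le_sum fun i hi ↦ ?_
    have hi := mem_range.1 hi
    rw [min_eq_left hi.le, min_eq_left hi]
    exact abs_sub_abs_sq_le _ _
  · intro i _
    rw [min_eq_right (by omega), min_eq_right (by omega), sub_self, zero_pow two_ne_zero]

theorem sum_sq_le_sum_abs_comp_min_sq (c : ℕ → ℝ) (k l : ℕ) :
    ∑ i ∈ range k, c (i + 1) ^ 2 ≤ ∑ i ∈ range (k + l + 1), |c (min i k)| ^ 2 :=
  calc ∑ i ∈ range k, c (i + 1) ^ 2
    _ = ∑ i ∈ range k, |c (min (i + 1) k)| ^ 2 :=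
      sum_congr rfl fun i hi ↦ by rw [min_eq_left (mem_range.1 hi), sq_abs]
    _ ≤ ∑ i ∈ range (k + l), |c (min (i + 1) k)| ^ 2 :=
      sum_le_sum_of_subset_of_nonneg (range_mono (Nat.le_add_right k l))
        fun _ _ _ ↦ sq_nonneg _
    _ ≤ ∑ i ∈ range (k + l + 1), |c (min i k)| ^ 2 := by
      rw [sum_range_succ']
      exact le_add_of_nonneg_right (sq_nonneg _)

theorem partialSups_one_eq {α : Type*} [SemilatticeSup α] {f : ℕ → α}
    (hf : f 0 ≤ f 1) : partialSups f 1 = f 1 := by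
  rw [← zero_add 1, ← Order.succ_eq_add_one, partialSups_succ, partialSups_zero]
  exact sup_eq_right.2 hf

theorem qmin_Cstar_three_mul_normSq_lt_of_antisymm
    (h : IsReflectEigenprofile (2 * (r + 2) + 1) l P (-1) c p g)
    (hpos : 0 < cstarNormSq (2 * (r + 2) + 1) l P c p g) :
    qmin (Cstar (3 + (l + r + 1) + (P + (r + 1))) 3 (l + r + 1)) *
        cstarNormSq (2 * (r + 2) + 1) l P c p g < cstarEnergy (2 * (r + 2) + 1) l P c p g := by
  let f : ℕ → ℝ := fun i ↦ |c (min i (r + 2))|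
  have hf : ∀ i ≤ r + 2, f i = |c i| := fun i hi ↦ by simp only [f, min_eq_left hi]
  have hf0 : f 0 = 0 := by rw [hf 0 (by omega), h.cycle_zero_of_antisymm, abs_zero]
  have hf1 : f 1 = |c 1| := hf 1 (by omega)
  have hS1 : partialSups f 1 = f 1 := partialSups_one_eq (hf0.trans_le (abs_nonneg _))
  have hm : |(0 : ℝ)| ≤ partialSups f (l + r + 2) := by
    rw [abs_zero, ← hf0]
    exact le_partialSups_of_le f (Nat.zero_le _)
  have hh : ∀ j < r + 1, |c (j + 2)| ≤ partialSups f (l + r + 2) := fun j hj ↦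
    (hf (j + 2) (by omega)).ge.trans (le_partialSups_of_le f (by omega))
  have hnorm : cstarNormSq (2 * (r + 2) + 1) l P c p g ≤
      f 1 ^ 2 + ∑ i ∈ range (l + r + 1 + 2), f i ^ 2 + ∑ j ∈ range P, (0 : ℝ) ^ 2 +
        ∑ j ∈ range (r + 1), c (j + 2) ^ 2 := by
    have htrunk := sum_sq_le_sum_abs_comp_min_sq c (r + 2) l
    have hhalf := sum_range_succ' (fun i ↦ c (i + 1) ^ 2) (r + 1)
    rw [h.normSq_eq_of_antisymm, hf1, sq_abs, zero_pow two_ne_zero, sum_const_zero,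
      show l + r + 1 + 2 = r + 2 + l + 1 by ring]
    linarith
  have henergy : (f 0 + f 1) ^ 2 + (partialSups f 1 - f 1) ^ 2 +
      ∑ i ∈ range (l + r + 1 + 1), (f i - f (i + 1)) ^ 2 + ∑ j ∈ range P, ((0 : ℝ) + 0) ^ 2 ≤
      cstarEnergy (2 * (r + 2) + 1) l P c p g := by
    have htrunk := sum_abs_comp_min_sub_sq_le c (r + 2) l
    have hapex : (f 0 + f 1) ^ 2 ≤ ∑ i ∈ range (r + 2), (c i + c (i + 1)) ^ 2 := by
      rw [hf0, zero_add, hf1, sq_abs, ← zero_add (c 1), ← h.cycle_zero_of_antisymm]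
      exact single_le_sum (f := fun i ↦ (c i + c (i + 1)) ^ 2) (fun i _ ↦ sq_nonneg _)
        (mem_range.2 (Nat.succ_pos (r + 1)))
    rw [h.energy_eq_of_antisymm, hS1, sub_self, add_zero, zero_pow two_ne_zero, sum_const_zero,
      show l + r + 1 + 1 = r + 2 + l by ring]
    linarith
  exact (mul_le_mul_of_nonneg_left hnorm (qmin_nonneg _)).trans_lt
    ((qmin_Cstar_three_mul_lt_of_trunk (fun i ↦ abs_nonneg _) (abs_nonneg _) hS1.ge hm hh
      (hpos.trans_le hnorm)).trans_le henergy)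

theorem qmin_Cstar_three_lt_qmin_Cstar (r l P : ℕ) :
    qmin (Cstar (3 + (l + r + 1) + (P + (r + 1))) 3 (l + r + 1)) <
      qmin (Cstar (2 * (r + 2) + 1 + l + P) (2 * (r + 2) + 1) l) := by
  obtain ⟨ε, c, p, g, hε, h, hpos, henergy⟩ :=
    exists_isReflectEigenprofile_energy_eq_qmin (show 3 ≤ 2 * (r + 2) + 1 by omega) l P
  refine lt_of_mul_lt_mul_right ?_ hpos.le
  rw [← henergy]
  rcases hε with rfl | rfl
  · exact qmin_Cstar_three_mul_normSq_lt_of_symm h hpos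
  · exact qmin_Cstar_three_mul_normSq_lt_of_antisymm h hpos

end Comparison

/-- For `k ≥ 1` and `t = l + k - 1`, with both graphs of order `n ≥ 2k + 1 + l`,
`q_min(C*_{3,t}) ≤ q_min(C*_{2k+1,l})`, with equality iff `k = 1`. -/
theorem qmin_Cstar_three_le
    (n k l : ℕ) (hk : 1 ≤ k) (hn : 2 * k + 1 + l ≤ n) :
    qmin (Cstar n 3 (l + k - 1)) ≤ qmin (Cstar n (2 * k + 1) l) ∧
      (qmin (Cstar n 3 (l + k - 1)) = qmin (Cstar n (2 * k + 1) l) ↔ k = 1) := by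
  obtain ⟨P, rfl⟩ := Nat.exists_eq_add_of_le hn
  obtain _ | _ | r := k
  · omega
  · exact ⟨le_rfl, iff_of_true rfl rfl⟩
  · have h := qmin_Cstar_three_lt_qmin_Cstar r l P
    rw [show 3 + (l + r + 1) + (P + (r + 1)) = 2 * (r + 2) + 1 + l + P by ring] at h
    exact ⟨h.le, iff_of_false h.ne (by omega)⟩
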